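/- Let 𝒜 be a unital C*-algebra, τ a strongly continuous one-parameter group of *-automorphisms of 𝒜, Θ a time-reversal operation on 𝒜 such that τ is time-reversal invariant (Θ ∘ τ_t = τ_{−t} ∘ Θ for all t), and β ∈ (0,∞). Let ω be a state on 𝒜 satisfying the (τ,β)-KMS condition which is moreover stationary and hermitian. Then the functional ω^Θ defined by ω^Θ(B) := conj(ω(Θ(B))) is a state on 𝒜 satisfying the (τ,β)-KMS condition, and ½ω + ½ω^Θ is a state satisfying the (τ,β)-KMS condition that is time-reversal invariant, i.e., (½ω + ½ω^Θ)(Θ(B)) = conj((½ω + ½ω^Θ)(B)) for all B ∈ 𝒜. -/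

import Mathlib

/-!
Moving `Θ` through the time evolution reverses the direction of time, and the complex conjugation
in `ω^Θ` is undone by taking adjoints, which also reverses the order of products. By stationarity,
`ω^Θ(B₁ τ_t(B₂)) = ω(Θ(B₂)* τ_t(Θ(B₁)*))` and `ω^Θ(τ_t(B₂) B₁) = ω(τ_t(Θ(B₁)*) Θ(B₂)*)`, so a KMS
function of `ω` for the pair `(Θ(B₂)*, Θ(B₁)*)` is, with no change of variable, a KMS function of
`ω^Θ` for `(B₁, B₂)`. The KMS condition is linear in the functional and the states form a convex
set, so both properties pass to the average of `ω` and `ω^Θ`.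
-/

section

variable {A : Type*} [NormedRing A] [StarRing A] [CStarRing A]
  [NormedAlgebra ℂ A] [CompleteSpace A] [StarModule ℂ A]

/-- A state on a unital C*-algebra: a continuous linear functional `ω` with `ω(1) = 1` and
`ω(B*B)` a nonnegative real number for every `B`. -/
def IsState (ω : A →L[ℂ] ℂ) : Prop :=
  ω 1 = 1 ∧ ∀ B : A, ∃ r : ℝ, 0 ≤ r ∧ ω (star B * B) = (r : ℂ)

/-- The `(τ,β)`-KMS condition for a continuous linear functional `ω`: for all `B₁, B₂` there is
a bounded continuous function `F` on the closed strip `{0 ≤ Im z ≤ β}`, holomorphic on the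
open strip `{0 < Im z < β}`, with `F(t) = ω(B₁ τ_t(B₂))` and `F(t+iβ) = ω(τ_t(B₂) B₁)` for
all real `t`. -/
def IsKMS (τ : ℝ → A → A) (β : ℝ) (ω : A →L[ℂ] ℂ) : Prop :=
  ∀ B₁ B₂ : A, ∃ F : ℂ → ℂ,
    (∃ C : ℝ, ∀ z ∈ {z : ℂ | 0 ≤ z.im ∧ z.im ≤ β}, ‖F z‖ ≤ C) ∧
    ContinuousOn F {z : ℂ | 0 ≤ z.im ∧ z.im ≤ β} ∧
    DifferentiableOn ℂ F {z : ℂ | 0 < z.im ∧ z.im < β} ∧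
    (∀ t : ℝ, F (t : ℂ) = ω (B₁ * τ t B₂)) ∧
    (∀ t : ℝ, F ((t : ℂ) + Complex.I * (β : ℂ)) = ω (τ t B₂ * B₁))

section

open scoped ComplexOrder ComplexConjugate

variable {E : Type*} [NormedRing E] [NormedAlgebra ℂ E]

theorem isState_iff [StarRing E] {ω : E →L[ℂ] ℂ} :
    IsState ω ↔ ω 1 = 1 ∧ ∀ B : E, 0 ≤ ω (star B * B) := by
  refine and_congr_right' (forall_congr' fun B => ?_)
  rw [RCLike.nonneg_iff_exists_ofReal]
  exact exists_congr fun r => and_congr_right' eq_comm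

theorem IsState.smul_add_smul [StarRing E] {ω φ : E →L[ℂ] ℂ} (hω : IsState ω) (hφ : IsState φ)
    {a b : ℂ} (ha : 0 ≤ a) (hb : 0 ≤ b) (hab : a + b = 1) : IsState (a • ω + b • φ) := by
  rw [isState_iff] at hω hφ ⊢
  refine ⟨?_, fun B => add_nonneg (mul_nonneg ha (hω.2 B)) (mul_nonneg hb (hφ.2 B))⟩
  simpa [hω.1, hφ.1] using hab

theorem IsKMS.smul {τ : ℝ → E → E} {β : ℝ} {ω : E →L[ℂ] ℂ} (hω : IsKMS τ β ω) (c : ℂ) :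
    IsKMS τ β (c • ω) := by
  intro B₁ B₂
  obtain ⟨F, ⟨C, hF_bdd⟩, hF_cont, hF_diff, hF_zero, hF_beta⟩ := hω B₁ B₂
  refine ⟨c • F, ⟨‖c‖ * C, fun z hz => ?_⟩, hF_cont.const_smul c, hF_diff.const_smul c,
    fun t => congrArg (c • ·) (hF_zero t), fun t => congrArg (c • ·) (hF_beta t)⟩
  rw [Pi.smul_apply, norm_smul]
  gcongr
  exact hF_bdd z hz

theorem IsKMS.add {τ : ℝ → E → E} {β : ℝ} {ω φ : E →L[ℂ] ℂ} (hω : IsKMS τ β ω)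
    (hφ : IsKMS τ β φ) : IsKMS τ β (ω + φ) := by
  intro B₁ B₂
  obtain ⟨F, ⟨C, hF_bdd⟩, hF_cont, hF_diff, hF_zero, hF_beta⟩ := hω B₁ B₂
  obtain ⟨G, ⟨D, hG_bdd⟩, hG_cont, hG_diff, hG_zero, hG_beta⟩ := hφ B₁ B₂
  exact ⟨F + G, ⟨C + D, fun z hz => norm_add_le_of_le (hF_bdd z hz) (hG_bdd z hz)⟩,
    hF_cont.add hG_cont, hF_diff.add hG_diff,
    fun t => congrArg₂ (· + ·) (hF_zero t) (hG_zero t),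
    fun t => congrArg₂ (· + ·) (hF_beta t) (hG_beta t)⟩

section Module

variable {V : Type*} [AddCommMonoid V] [Module ℂ V] [TopologicalSpace V]

/-- The time reversal `ω^Θ` of a functional `ω`, that is, `B ↦ conj (ω (Θ B))`. Conjugating makes
it linear again, as `Θ` is conjugate-linear. -/
noncomputable def timeReversal (Θ : V →L⋆[ℂ] V) (ω : V →L[ℂ] ℂ) : V →L[ℂ] ℂ :=
  (starL ℂ : ℂ ≃L⋆[ℂ] ℂ).toContinuousLinearMap.comp (ω.comp Θ)

theorem timeReversal_apply (Θ : V →L⋆[ℂ] V) (ω : V →L[ℂ] ℂ) (B : V) :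
    timeReversal Θ ω B = conj (ω (Θ B)) :=
  rfl

theorem smul_add_smul_timeReversal_apply {Θ : V →L⋆[ℂ] V} (hΘ : Function.Involutive Θ)
    (ω : V →L[ℂ] ℂ) {c : ℂ} (hc : conj c = c) (B : V) :
    (c • ω + c • timeReversal Θ ω) (Θ B) = conj ((c • ω + c • timeReversal Θ ω) B) := by
  simp only [add_apply, smul_apply, smul_eq_mul, timeReversal_apply, hΘ B, map_add, map_mul, hc,
    Complex.conj_conj]
  exact add_comm _ _

end Module

variable [StarRing E] {Θ : E →L⋆[ℂ] E} {ω : E →L[ℂ] ℂ}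

theorem IsState.timeReversal (hω : IsState ω) (hΘ_one : Θ 1 = 1)
    (hΘ_mul : ∀ x y, Θ (x * y) = Θ x * Θ y) (hΘ_star : ∀ x, Θ (star x) = star (Θ x)) :
    IsState (timeReversal Θ ω) := by
  rw [isState_iff] at hω ⊢
  refine ⟨by rw [timeReversal_apply, hΘ_one, hω.1, map_one], fun B => ?_⟩
  rw [timeReversal_apply, hΘ_mul, hΘ_star]
  exact star_nonneg_iff.mpr (hω.2 (Θ B))

theorem timeReversal_mul (hΘ_mul : ∀ x y, Θ (x * y) = Θ x * Θ y)
    (hω_herm : ∀ x, ω (star x) = conj (ω x)) (x y : E) :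
    timeReversal Θ ω (x * y) = ω (star (Θ y) * star (Θ x)) := by
  rw [timeReversal_apply, hΘ_mul, ← hω_herm, star_mul]

theorem apply_rightInverse_mul {R S : Type*} [Mul R] {σ ρ : R → R} {f : R → S}
    (hσ_mul : ∀ x y, σ (x * y) = σ x * σ y) (hσρ : Function.LeftInverse σ ρ)
    (hf : ∀ x, f (σ x) = f x) (x y : R) : f (ρ x * y) = f (x * σ y) := by
  rw [← hf, hσ_mul, hσρ x]

theorem apply_mul_rightInverse {R S : Type*} [Mul R] {σ ρ : R → R} {f : R → S}
    (hσ_mul : ∀ x y, σ (x * y) = σ x * σ y) (hσρ : Function.LeftInverse σ ρ)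
    (hf : ∀ x, f (σ x) = f x) (x y : R) : f (x * ρ y) = f (σ x * y) := by
  rw [← hf, hσ_mul, hσρ y]

theorem IsKMS.timeReversal {τ : ℝ → E → E} {β : ℝ} (hω : IsKMS τ β ω)
    (hτ_mul : ∀ t x y, τ t (x * y) = τ t x * τ t y)
    (hτ_star : ∀ t x, τ t (star x) = star (τ t x))
    (hτ_neg : ∀ t, Function.LeftInverse (τ t) (τ (-t)))
    (hΘ_mul : ∀ x y, Θ (x * y) = Θ x * Θ y)
    (hΘτ : ∀ t, Function.Semiconj Θ (τ t) (τ (-t)))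
    (hω_stat : ∀ t x, ω (τ t x) = ω x) (hω_herm : ∀ x, ω (star x) = conj (ω x)) :
    IsKMS τ β (timeReversal Θ ω) := by
  intro B₁ B₂
  obtain ⟨F, hF_bdd, hF_cont, hF_diff, hF_zero, hF_beta⟩ := hω (star (Θ B₂)) (star (Θ B₁))
  have star_Θ_evolution (t : ℝ) : star (Θ (τ t B₂)) = τ (-t) (star (Θ B₂)) := by
    rw [hΘτ t B₂, hτ_star]
  refine ⟨F, hF_bdd, hF_cont, hF_diff, fun t => ?_, fun t => ?_⟩
  · rw [hF_zero, timeReversal_mul hΘ_mul hω_herm, star_Θ_evolution,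
      apply_rightInverse_mul (hτ_mul t) (hτ_neg t) (hω_stat t)]
  · rw [hF_beta, timeReversal_mul hΘ_mul hω_herm, star_Θ_evolution,
      apply_mul_rightInverse (hτ_mul t) (hτ_neg t) (hω_stat t)]

theorem statement17_general {τ : ℝ → E → E} {β : ℝ}
    (hτ_mul : ∀ t x y, τ t (x * y) = τ t x * τ t y)
    (hτ_star : ∀ t x, τ t (star x) = star (τ t x))
    (hτ_neg : ∀ t, Function.LeftInverse (τ t) (τ (-t)))
    (hΘ_one : Θ 1 = 1) (hΘ_mul : ∀ x y, Θ (x * y) = Θ x * Θ y)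
    (hΘ_star : ∀ x, Θ (star x) = star (Θ x)) (hΘ_invol : Function.Involutive Θ)
    (hΘτ : ∀ t, Function.Semiconj Θ (τ t) (τ (-t)))
    (hω_state : IsState ω) (hω_kms : IsKMS τ β ω) (hω_stat : ∀ t x, ω (τ t x) = ω x)
    (hω_herm : ∀ x, ω (star x) = conj (ω x)) :
    IsState (timeReversal Θ ω) ∧ IsKMS τ β (timeReversal Θ ω) ∧
      IsState ((1/2 : ℂ) • ω + (1/2 : ℂ) • timeReversal Θ ω) ∧
      IsKMS τ β ((1/2 : ℂ) • ω + (1/2 : ℂ) • timeReversal Θ ω) ∧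
      ∀ B, ((1/2 : ℂ) • ω + (1/2 : ℂ) • timeReversal Θ ω) (Θ B) =
        conj (((1/2 : ℂ) • ω + (1/2 : ℂ) • timeReversal Θ ω) B) := by
  have hstate := hω_state.timeReversal hΘ_one hΘ_mul hΘ_star
  have hkms := hω_kms.timeReversal hτ_mul hτ_star hτ_neg hΘ_mul hΘτ hω_stat hω_herm
  have conj_half : conj (1 / 2 : ℂ) = 1 / 2 := by rw [map_div₀, map_one, Complex.conj_ofNat]
  exact ⟨hstate, hkms,
    hω_state.smul_add_smul hstate (by positivity) (by positivity) (add_halves 1),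
    (hω_kms.smul _).add (hkms.smul _),
    smul_add_smul_timeReversal_apply hΘ_invol ω conj_half⟩

end

/-- Let `𝒜` be a unital C*-algebra, `τ` a strongly continuous one-parameter
group of *-automorphisms, `Θ` a time-reversal operation with `Θ ∘ τ_t = τ_{−t} ∘ Θ`, and
`β ∈ (0,∞)`. Let `ω` be a state satisfying the `(τ,β)`-KMS condition which is moreover
stationary and hermitian. Then `ω^Θ(B) := conj(ω(Θ(B)))` is a state satisfying the
`(τ,β)`-KMS condition, and `½ω + ½ω^Θ` is a `(τ,β)`-KMS state that is time-reversal
invariant. -/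
theorem statement17
    (τ : ℝ → A → A)
    (hτ_zero : ∀ x : A, τ 0 x = x)
    (hτ_grp : ∀ s t : ℝ, ∀ x : A, τ (s + t) x = τ s (τ t x))
    (hτ_add : ∀ t : ℝ, ∀ x y : A, τ t (x + y) = τ t x + τ t y)
    (hτ_smul : ∀ t : ℝ, ∀ (c : ℂ) (x : A), τ t (c • x) = c • τ t x)
    (hτ_mul : ∀ t : ℝ, ∀ x y : A, τ t (x * y) = τ t x * τ t y)
    (hτ_one : ∀ t : ℝ, τ t 1 = 1)
    (hτ_star : ∀ t : ℝ, ∀ x : A, τ t (star x) = star (τ t x))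
    (hτ_cont : ∀ x : A, Continuous fun t : ℝ => τ t x)
    (Θ : A → A)
    (hΘ_cont : Continuous Θ)
    (hΘ_add : ∀ x y : A, Θ (x + y) = Θ x + Θ y)
    (hΘ_smul : ∀ (c : ℂ) (x : A), Θ (c • x) = (starRingEnd ℂ) c • Θ x)
    (hΘ_one : Θ 1 = 1)
    (hΘ_mul : ∀ x y : A, Θ (x * y) = Θ x * Θ y)
    (hΘ_star : ∀ x : A, Θ (star x) = star (Θ x))
    (hΘ_invol : ∀ x : A, Θ (Θ x) = x)
    (hΘτ : ∀ t : ℝ, ∀ x : A, Θ (τ t x) = τ (-t) (Θ x))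
    {β : ℝ} (hβ : 0 < β)
    (ω : A →L[ℂ] ℂ) (hω_state : IsState ω) (hω_kms : IsKMS τ β ω)
    (hω_stat : ∀ t : ℝ, ∀ x : A, ω (τ t x) = ω x)
    (hω_herm : ∀ x : A, ω (star x) = (starRingEnd ℂ) (ω x)) :
    ∃ ωΘ : A →L[ℂ] ℂ,
      (∀ B : A, ωΘ B = (starRingEnd ℂ) (ω (Θ B))) ∧
      IsState ωΘ ∧ IsKMS τ β ωΘ ∧
      IsState ((1/2 : ℂ) • ω + (1/2 : ℂ) • ωΘ) ∧
      IsKMS τ β ((1/2 : ℂ) • ω + (1/2 : ℂ) • ωΘ) ∧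
      (∀ B : A, ((1/2 : ℂ) • ω + (1/2 : ℂ) • ωΘ) (Θ B)
          = (starRingEnd ℂ) (((1/2 : ℂ) • ω + (1/2 : ℂ) • ωΘ) B)) := by
  let Θₗ : A →L⋆[ℂ] A := ⟨⟨⟨Θ, hΘ_add⟩, hΘ_smul⟩, hΘ_cont⟩
  have hτ_neg (t : ℝ) : Function.LeftInverse (τ t) (τ (-t)) := fun x => by
    rw [← hτ_grp, add_neg_cancel, hτ_zero]
  exact ⟨timeReversal Θₗ ω, timeReversal_apply Θₗ ω, statement17_general (Θ := Θₗ) hτ_mul hτ_star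
    hτ_neg hΘ_one hΘ_mul hΘ_star hΘ_invol hΘτ hω_state hω_kms hω_stat hω_herm⟩

end
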